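/- Let ν ≥ 1 and let q_1, q_2 : [0,2π)^ν → ℝ be bounded measurable with η ≤ q_k(x) ≤ M a.e. for some 0 < η ≤ M. For n ∈ ℕ set Q_k^{(n)} := T_n(q_k) and R_{k,n} := Q_k^{(n)} (Q_k^{(n)} + I)^{−1}. Then lim_{n→∞} (1/n^ν) Tr[ (I + Q_1^{(n)}) S_2(R_{1,n} ‖ R_{2,n}) ] = (2π)^{−ν} ∫_{[0,2π)^ν} (1 + q_1(x)) · S_2( r_1(x) ‖ r_2(x) ) dx, where r_k := q_k/(1 + q_k) and, for scalars 0 < a, b < 1, S_2(a‖b) := a(log a − log b) + (1−a)(log(1−a) − log(1−b)). -/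

import Mathlib

open MeasureTheory Filter Matrix Set

noncomputable section

/-- The cube `[0, 2π)^ν`. -/
def cube (ν : ℕ) : Set (Fin ν → ℝ) := Set.univ.pi fun _ => Set.Ico 0 (2 * Real.pi)

/-- Fourier coefficient of `a : [0,2π)^ν → ℂ` at `j ∈ ℤ^ν`. -/
def fourierCoefficient {ν : ℕ} (a : (Fin ν → ℝ) → ℂ) (j : Fin ν → ℤ) : ℂ :=
  (((2 * Real.pi) ^ ν : ℝ) : ℂ)⁻¹ *
    ∫ x in cube ν, a x * Complex.exp (-Complex.I * ∑ m, (j m : ℂ) * (x m : ℂ))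

/-- The Toeplitz compression `T_n(a)` with entries `â(j−k)`, `j,k ∈ {0,…,n−1}^ν`. -/
def toeplitz {ν : ℕ} (n : ℕ) (a : (Fin ν → ℝ) → ℂ) :
    Matrix (Fin ν → Fin n) (Fin ν → Fin n) ℂ :=
  Matrix.of fun j k => fourierCoefficient a fun m => (j m : ℤ) - (k m : ℤ)

/-- Logarithm of a positive definite matrix via the continuous functional calculus. -/
def mlog {m : Type*} [Fintype m] [DecidableEq m] (A : Matrix m m ℂ) : Matrix m m ℂ :=
  cfc Real.log A

/-- `S₂(A‖B) = A(log A − log B) + (I − A)(log(I−A) − log(I−B))` for matrices `0 ≺ A, B ≺ I`. -/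
def S2mat {m : Type*} [Fintype m] [DecidableEq m] (A B : Matrix m m ℂ) : Matrix m m ℂ :=
  A * (mlog A - mlog B) + (1 - A) * (mlog (1 - A) - mlog (1 - B))

/-- Scalar `S₂(a‖b) = a(log a − log b) + (1−a)(log(1−a) − log(1−b))` for `0 < a, b < 1`. -/
def S2s (a b : ℝ) : ℝ :=
  a * (Real.log a - Real.log b) + (1 - a) * (Real.log (1 - a) - Real.log (1 - b))

/-!
For an eigenvector `v_i` of `T_n(b)`, `⟨v_i, T_n(a) v_i⟩` is the integral of `a` against a
probability measure `P_i` on the cube, with density proportional to `|∑ₖ v_i(k) e^{i k·x}|²`, and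
the `P_i` add up to `n^ν` times the uniform measure. Hence `P_i` has `b`-mean the eigenvalue `λ_i`,
and the `b`-variances of all the `P_i` sum to `n^ν ⨍ b² - ‖T_n(b)‖²` (Hilbert–Schmidt norm). By
Parseval, and since the boxes form a Følner sequence in `ℤ^ν`, this is `o(n^ν)`. So under most
`P_i` the symbol `b` is concentrated near `λ_i`, and replacing `f(λ_i)` by `f(b)` in
`Tr(T_n(a) f(T_n(b))) = ∑ᵢ f(λ_i) ∫ a dP_i` costs only `o(n^ν)`: this is Szegő's limit
`n^{-ν} Tr(T_n(a) f(T_n(b))) → ⨍ a f(b)`, for any continuous `f`. With `φ(x) = log (x / (1 + x))`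
and `ψ(x) = -log (1 + x)`, the relative entropy `(I + Q₁) S₂(R₁‖R₂)` equals
`Q₁ (φ(Q₁) - φ(Q₂)) + ψ(Q₁) - ψ(Q₂)`, a combination of such terms.
-/

lemma exists_dist_le_add_mul_dist_sq {X Y : Type*} [PseudoMetricSpace X] [PseudoMetricSpace Y]
    {K : Set X} (hK : IsCompact K) {f : X → Y} (hf : ContinuousOn f K) {ε : ℝ} (hε : 0 < ε) :
    ∃ C, ∀ s ∈ K, ∀ t ∈ K, dist (f s) (f t) ≤ ε + C * dist s t ^ 2 := by
  obtain ⟨δ, hδ, hclose⟩ :=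
    Metric.uniformContinuousOn_iff.1 (hK.uniformContinuousOn_of_continuous hf) ε hε
  set D := Metric.diam (f '' K)
  refine ⟨D / δ ^ 2, fun s hs t ht => ?_⟩
  rcases lt_or_ge (dist s t) δ with hst | hst
  · have : 0 ≤ D / δ ^ 2 * dist s t ^ 2 := by positivity
    linarith [hclose s hs t ht hst]
  · calc dist (f s) (f t) ≤ D := Metric.dist_le_diam_of_mem
          (hK.image_of_continuousOn hf).isBounded (mem_image_of_mem f hs) (mem_image_of_mem f ht)
      _ = D / δ ^ 2 * δ ^ 2 := by field_simp
      _ ≤ D / δ ^ 2 * dist s t ^ 2 := by gcongr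
      _ ≤ ε + D / δ ^ 2 * dist s t ^ 2 := by linarith

section Concentration

open ProbabilityTheory
open scoped NNReal

variable {X : Type*} {mX : MeasurableSpace X} {a b : X → ℝ} {f : ℝ → ℝ} {A η M ε C : ℝ}

lemma aestronglyMeasurable_comp_of_continuousOn_Icc {μ : Measure X}
    (hf : ContinuousOn f (Icc η M)) (hb : AEStronglyMeasurable b μ)
    (hbI : ∀ᵐ x ∂μ, b x ∈ Icc η M) : AEStronglyMeasurable (fun x => f (b x)) μ := by
  rcases lt_or_ge M η with hηM | hηM
  · have : μ = 0 := by simpa [Icc_eq_empty_of_lt hηM] using hbI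
    simp [this]
  · refine ((hf.domRestrict.Icc_extend' (h := hηM)).comp_aestronglyMeasurable hb).congr ?_
    filter_upwards [hbI] with x hx
    exact IccExtend_of_mem hηM _ hx

lemma integrable_mul_comp_of_continuousOn_Icc {μ : Measure X} (ha : Integrable a μ)
    (hf : ContinuousOn f (Icc η M)) (hb : AEStronglyMeasurable b μ)
    (hbI : ∀ᵐ x ∂μ, b x ∈ Icc η M) : Integrable (fun x => a x * f (b x)) μ := by
  obtain ⟨B, hB⟩ := isCompact_Icc.exists_bound_of_continuousOn hf
  exact ha.mul_bdd (c := B) (aestronglyMeasurable_comp_of_continuousOn_Icc hf hb hbI)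
    (hbI.mono fun x hx => hB _ hx)

lemma integrable_mul_comp_sub_comp_of_continuousOn_Icc {μ : Measure X} {b₁ b₂ : X → ℝ}
    (ha : Integrable a μ) (hf : ContinuousOn f (Icc η M))
    (hb₁ : AEStronglyMeasurable b₁ μ) (hb₁I : ∀ᵐ x ∂μ, b₁ x ∈ Icc η M)
    (hb₂ : AEStronglyMeasurable b₂ μ) (hb₂I : ∀ᵐ x ∂μ, b₂ x ∈ Icc η M) :
    Integrable (fun x => a x * (f (b₁ x) - f (b₂ x))) μ := by
  simp only [mul_sub]
  exact (integrable_mul_comp_of_continuousOn_Icc ha hf hb₁ hb₁I).sub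
    (integrable_mul_comp_of_continuousOn_Icc ha hf hb₂ hb₂I)

lemma abs_mul_integral_sub_integral_mul_comp_le {P : Measure X} [IsProbabilityMeasure P]
    (ha : AEStronglyMeasurable a P) (haA : ∀ᵐ x ∂P, |a x| ≤ A)
    (hb : AEStronglyMeasurable b P) (hbI : ∀ᵐ x ∂P, b x ∈ Icc η M)
    (hf : ContinuousOn f (Icc η M))
    (hfC : ∀ s ∈ Icc η M, ∀ t ∈ Icc η M, |f s - f t| ≤ ε + C * (s - t) ^ 2) :
    |f (∫ x, b x ∂P) * ∫ x, a x ∂P - ∫ x, a x * f (b x) ∂P| ≤ A * (ε + C * Var[b; P]) := by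
  have hb2 : MemLp b 2 P := memLp_of_bounded hbI hb 2
  set m := ∫ x, b x ∂P with hm
  have hmI : m ∈ Icc η M :=
    (convex_Icc η M).integral_mem isClosed_Icc hbI (hb2.integrable one_le_two)
  have ha1 : Integrable a P := .of_bound ha A haA
  have hafb := integrable_mul_comp_of_continuousOn_Icc ha1 hf hb hbI
  have hvar : Integrable (fun x => (b x - m) ^ 2) P := (hb2.sub (memLp_const m)).integrable_sq
  have hbound : ∀ᵐ x ∂P, ‖f m * a x - a x * f (b x)‖ ≤ A * (ε + C * (b x - m) ^ 2) := by
    filter_upwards [haA, hbI] with x hax hbx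
    rw [Real.norm_eq_abs, show f m * a x - a x * f (b x) = a x * (f m - f (b x)) by ring, abs_mul,
      sub_sq_comm]
    exact mul_le_mul hax (hfC m hmI _ hbx) (abs_nonneg _) ((abs_nonneg _).trans hax)
  calc |f m * ∫ x, a x ∂P - ∫ x, a x * f (b x) ∂P|
      = ‖∫ x, (f m * a x - a x * f (b x)) ∂P‖ := by
        rw [integral_sub (ha1.const_mul _) hafb, integral_const_mul, Real.norm_eq_abs]
    _ ≤ ∫ x, A * (ε + C * (b x - m) ^ 2) ∂P :=
        norm_integral_le_of_norm_le
          (((integrable_const ε).add (hvar.const_mul C)).const_mul A) hbound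
    _ = A * (ε + C * Var[b; P]) := by
        rw [integral_const_mul, integral_add (integrable_const ε) (hvar.const_mul C),
          integral_const_mul, variance_eq_integral hb.aemeasurable]
        simp [hm]

section Decomposition

variable {ι : Type*} [Fintype ι] {μ : Measure X} {P : ι → Measure X} {c : ℝ≥0}

lemma le_smul_of_sum_eq_smul (hP : ∑ i, P i = c • μ) (i : ι) : P i ≤ c • μ :=
  hP ▸ Finset.single_le_sum (fun j _ => Measure.zero_le (P j)) (Finset.mem_univ i)

lemma mul_integral_eq_sum_integral (hP : ∑ i, P i = c • μ) (ha : Integrable a μ) :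
    c * ∫ x, a x ∂μ = ∑ i, ∫ x, a x ∂P i := by
  rw [← integral_finsetSum_measure fun i _ =>
    ha.smul_measure_nnreal.mono_measure (le_smul_of_sum_eq_smul hP i), hP,
    integral_smul_nnreal_measure, NNReal.smul_def, smul_eq_mul]

lemma abs_sum_mul_integral_sub_mul_integral_le [IsFiniteMeasure μ]
    [∀ i, IsProbabilityMeasure (P i)] (hP : ∑ i, P i = c • μ)
    (ha : AEStronglyMeasurable a μ) (haA : ∀ᵐ x ∂μ, |a x| ≤ A)
    (hb : AEStronglyMeasurable b μ) (hbI : ∀ᵐ x ∂μ, b x ∈ Icc η M)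
    (hf : ContinuousOn f (Icc η M))
    (hfC : ∀ s ∈ Icc η M, ∀ t ∈ Icc η M, |f s - f t| ≤ ε + C * (s - t) ^ 2) :
    |∑ i, f (∫ x, b x ∂P i) * ∫ x, a x ∂P i - c * ∫ x, a x * f (b x) ∂μ| ≤
      A * (ε * Fintype.card ι + C * (c * ∫ x, b x ^ 2 ∂μ - ∑ i, (∫ x, b x ∂P i) ^ 2)) := by
  have hac (i : ι) : P i ≪ μ :=
    (Measure.absolutelyContinuous_of_le (le_smul_of_sum_eq_smul hP i)).trans
      Measure.smul_absolutelyContinuous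
  have hvar (i : ι) : Var[b; P i] = ∫ x, b x ^ 2 ∂P i - (∫ x, b x ∂P i) ^ 2 :=
    variance_eq_sub (memLp_of_bounded ((hac i).ae_le hbI) (hb.mono_ac (hac i)) 2)
  have hafb := integrable_mul_comp_of_continuousOn_Icc (.of_bound ha A haA) hf hb hbI
  rw [mul_integral_eq_sum_integral hP hafb,
    mul_integral_eq_sum_integral hP (memLp_of_bounded hbI hb 2).integrable_sq,
    ← Finset.sum_sub_distrib, ← Finset.sum_sub_distrib]
  calc |∑ i, (f (∫ x, b x ∂P i) * ∫ x, a x ∂P i - ∫ x, a x * f (b x) ∂P i)|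
      ≤ ∑ i, |f (∫ x, b x ∂P i) * ∫ x, a x ∂P i - ∫ x, a x * f (b x) ∂P i| :=
        Finset.abs_sum_le_sum_abs _ _
    _ ≤ ∑ i, A * (ε + C * Var[b; P i]) := Finset.sum_le_sum fun i _ =>
        abs_mul_integral_sub_integral_mul_comp_le (ha.mono_ac (hac i)) ((hac i).ae_le haA)
          (hb.mono_ac (hac i)) ((hac i).ae_le hbI) hf hfC
    _ = _ := by
        simp only [hvar, ← Finset.mul_sum, Finset.sum_add_distrib, Finset.sum_const,
          Finset.card_univ, nsmul_eq_mul, mul_comm ε]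

end Decomposition

end Concentration

section HermitianTrace

variable {m : Type*} [Fintype m] [DecidableEq m]

lemma trace_mul_cfc {B : Matrix m m ℂ} (hB : B.IsHermitian) (A : Matrix m m ℂ) (f : ℝ → ℝ) :
    (A * cfc f B).trace = ∑ i, (f (hB.eigenvalues i) : ℂ) *
      (star (hB.eigenvectorBasis i : m → ℂ) ⬝ᵥ A *ᵥ (hB.eigenvectorBasis i : m → ℂ)) := by
  set U : Matrix m m ℂ := (hB.eigenvectorUnitary : Matrix m m ℂ)
  set D : Matrix m m ℂ := diagonal (RCLike.ofReal ∘ f ∘ hB.eigenvalues)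
  calc (A * cfc f B).trace = (A * (U * D * star U)).trace := by
        rw [hB.cfc_eq, Matrix.IsHermitian.cfc, Unitary.conjStarAlgAut_apply]
    _ = (star U * (A * U) * D).trace := by
        rw [← mul_assoc, trace_mul_comm, ← mul_assoc, ← mul_assoc, mul_assoc (star U)]
    _ = _ := Finset.sum_congr rfl fun i _ => by
        rw [diag_apply, mul_diagonal, mul_comm]
        rfl

lemma sum_eigenvalues_sq {B : Matrix m m ℂ} (hB : B.IsHermitian) :
    ∑ i, hB.eigenvalues i ^ 2 = ∑ j, ∑ k, ‖B j k‖ ^ 2 := by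
  have hentry (j k : m) : B j k * B k j = ((‖B j k‖ ^ 2 : ℝ) : ℂ) := by
    rw [← hB.apply k j, Complex.ofReal_pow]
    exact Complex.mul_conj' _
  have htrace : (B * B).trace = ((∑ j, ∑ k, ‖B j k‖ ^ 2 : ℝ) : ℂ) := by
    simp only [trace, diag_apply, mul_apply, hentry, Complex.ofReal_sum]
  have hspec := trace_mul_cfc hB B id
  rw [cfc_id ℝ B hB.isSelfAdjoint, htrace] at hspec
  have hre := congrArg Complex.re hspec
  simp only [Complex.ofReal_re, Complex.re_sum, Complex.re_ofReal_mul, id_eq] at hre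
  rw [hre]
  refine Finset.sum_congr rfl fun i _ => ?_
  rw [sq]
  congr 1
  exact hB.eigenvalues_eq i

end HermitianTrace

section BerezinToeplitz

open scoped InnerProductSpace NNReal

variable {X : Type*} {mX : MeasurableSpace X} {ι : Type*}

/-- The Berezin–Toeplitz matrix `∫ a(x) |e x⟩⟨e x| dμ(x)` with symbol `a` built on the family of
coherent states `e`. -/
def berezinToeplitz (μ : Measure X) (e : X → EuclideanSpace ℂ ι) (a : X → ℝ) : Matrix ι ι ℂ :=
  Matrix.of fun j k => ∫ x, (a x : ℂ) * (e x j * star (e x k)) ∂μ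

lemma isHermitian_berezinToeplitz (μ : Measure X) (e : X → EuclideanSpace ℂ ι) (a : X → ℝ) :
    (berezinToeplitz μ e a).IsHermitian := by
  ext j k
  simp only [berezinToeplitz, conjTranspose_apply, of_apply, RCLike.star_def, ← integral_conj,
    map_mul, Complex.conj_ofReal, Complex.conj_conj, mul_comm (e _ j)]

variable [Fintype ι]

/-- The Husimi measure `|⟨e x, v⟩|² dμ(x)` of a vector `v` for the coherent states `e`: the measure
representing the quadratic form `a ↦ ⟨v, T(a) v⟩` of Berezin–Toeplitz matrices. -/
def husimiMeasure (μ : Measure X) (e : X → EuclideanSpace ℂ ι) (v : EuclideanSpace ℂ ι) :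
    Measure X :=
  μ.withDensity fun x => ENNReal.ofReal (‖⟪e x, v⟫_ℂ‖ ^ 2)

variable {μ : Measure X} {e : X → EuclideanSpace ℂ ι} {a b : X → ℝ}

lemma aemeasurable_husimiDensity (he : AEStronglyMeasurable e μ) (v : EuclideanSpace ℂ ι) :
    AEMeasurable (fun x => ENNReal.ofReal (‖⟪e x, v⟫_ℂ‖ ^ 2)) μ :=
  ((he.inner aestronglyMeasurable_const).norm.pow 2).aemeasurable.ennreal_ofReal

lemma husimiMeasure_absolutelyContinuous (v : EuclideanSpace ℂ ι) : husimiMeasure μ e v ≪ μ :=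
  withDensity_absolutelyContinuous _ _

lemma integrable_coherent_mul {A : ℝ} (he : MemLp e 2 μ) (ha : AEStronglyMeasurable a μ)
    (haA : ∀ᵐ x ∂μ, |a x| ≤ A) (j k : ι) :
    Integrable (fun x => (a x : ℂ) * (e x j * star (e x k))) μ := by
  have hcoord (i : ι) : MemLp (fun x => e x i) 2 μ :=
    (EuclideanSpace.proj (𝕜 := ℂ) i : EuclideanSpace ℂ ι →L[ℂ] ℂ).comp_memLp' he
  refine Integrable.bdd_mul (c := A) ((hcoord j).integrable_mul (hcoord k).star)
    (Complex.continuous_ofReal.comp_aestronglyMeasurable ha) ?_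
  simpa using haA

lemma sum_star_mul_mul_eq_norm_inner_sq (v w : EuclideanSpace ℂ ι) (t : ℝ) :
    ∑ j, ∑ k, star (v j) * (t * (w j * star (w k)) * v k) = ((‖⟪w, v⟫_ℂ‖ ^ 2 * t : ℝ) : ℂ) := by
  have hinner (y z : EuclideanSpace ℂ ι) : ⟪y, z⟫_ℂ = ∑ k, star (y k) * z k := by
    simp [PiLp.inner_apply, mul_comm]
  have hconj : (‖⟪w, v⟫_ℂ‖ : ℂ) ^ 2 = ⟪v, w⟫_ℂ * ⟪w, v⟫_ℂ := by
    rw [← inner_conj_symm v w, Complex.conj_mul']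
  push_cast
  rw [hconj, hinner, hinner, Finset.sum_mul_sum, Finset.sum_mul]
  refine Finset.sum_congr rfl fun j _ => ?_
  rw [Finset.sum_mul]
  exact Finset.sum_congr rfl fun k _ => by ring

lemma star_dotProduct_berezinToeplitz_mulVec {A : ℝ} (he : MemLp e 2 μ)
    (ha : AEStronglyMeasurable a μ) (haA : ∀ᵐ x ∂μ, |a x| ≤ A) (v : EuclideanSpace ℂ ι) :
    star (v : ι → ℂ) ⬝ᵥ berezinToeplitz μ e a *ᵥ (v : ι → ℂ) =
      ((∫ x, a x ∂husimiMeasure μ e v : ℝ) : ℂ) := by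
  have hint (j k : ι) :
      Integrable (fun x => star (v j) * ((a x : ℂ) * (e x j * star (e x k)) * v k)) μ :=
    ((integrable_coherent_mul he ha haA j k).mul_const _).const_mul _
  calc _ = ∑ j, ∑ k, ∫ x, star (v j) * ((a x : ℂ) * (e x j * star (e x k)) * v k) ∂μ := by
        simp only [dotProduct, mulVec, berezinToeplitz, of_apply, Finset.mul_sum,
          integral_mul_const, integral_const_mul, Pi.star_apply]
    _ = ∫ x, ((‖⟪e x, v⟫_ℂ‖ ^ 2 * a x : ℝ) : ℂ) ∂μ := by
        simp only [← sum_star_mul_mul_eq_norm_inner_sq]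
        rw [integral_finsetSum _ fun j _ => integrable_finsetSum _ fun k _ => hint j k]
        exact Finset.sum_congr rfl fun j _ => (integral_finsetSum _ fun k _ => hint j k).symm
    _ = _ := by
        rw [integral_complex_ofReal, husimiMeasure, integral_withDensity_eq_integral_toReal_smul₀
          (aemeasurable_husimiDensity he.1 v) (by simp)]
        simp only [ENNReal.toReal_ofReal (sq_nonneg _), smul_eq_mul]

lemma isProbabilityMeasure_husimiMeasure [DecidableEq ι] (he : MemLp e 2 μ)
    (hres : berezinToeplitz μ e (fun _ => 1) = 1) {v : EuclideanSpace ℂ ι} (hv : ‖v‖ = 1) :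
    IsProbabilityMeasure (husimiMeasure μ e v) := by
  have hmass : (1 : ℂ) = ((∫ _, 1 ∂husimiMeasure μ e v : ℝ) : ℂ) := by
    rw [← star_dotProduct_berezinToeplitz_mulVec (A := 1) he aestronglyMeasurable_const (by simp),
      hres, one_mulVec, dotProduct_comm, ← EuclideanSpace.inner_eq_star_dotProduct,
      inner_self_eq_norm_sq_to_K, hv]
    simp
  rw [integral_const, smul_eq_mul, mul_one, eq_comm, Complex.ofReal_eq_one] at hmass
  exact ⟨(ENNReal.toReal_eq_one_iff _).1 hmass⟩

lemma sum_husimiMeasure (he : AEStronglyMeasurable e μ) {c : ℝ≥0} (hc : ∀ x, ‖e x‖ ^ 2 = c)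
    (v : OrthonormalBasis ι ℂ (EuclideanSpace ℂ ι)) : ∑ i, husimiMeasure μ e (v i) = c • μ := by
  have hdensity (x : X) : ∑ i, ENNReal.ofReal (‖⟪e x, v i⟫_ℂ‖ ^ 2) = c := by
    rw [← ENNReal.ofReal_sum_of_nonneg fun _ _ => sq_nonneg _, v.sum_sq_norm_inner_left, hc,
      ENNReal.ofReal_coe_nnreal]
  ext s hs
  simp only [husimiMeasure, Measure.finsetSum_apply, withDensity_apply _ hs]
  rw [← lintegral_finsetSum' _ fun i _ => (aemeasurable_husimiDensity he (v i)).restrict]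
  simp only [hdensity, lintegral_const, Measure.restrict_apply_univ, Measure.smul_apply,
    ENNReal.smul_def, smul_eq_mul]

section Eigenvalues

variable [DecidableEq ι] {A η M ε C : ℝ} {f : ℝ → ℝ}

lemma eigenvalues_berezinToeplitz (hB : (berezinToeplitz μ e b).IsHermitian) (he : MemLp e 2 μ)
    (hb : AEStronglyMeasurable b μ) (hbA : ∀ᵐ x ∂μ, |b x| ≤ A) (i : ι) :
    hB.eigenvalues i = ∫ x, b x ∂husimiMeasure μ e (hB.eigenvectorBasis i) := by
  rw [hB.eigenvalues_eq, star_dotProduct_berezinToeplitz_mulVec he hb hbA]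
  exact Complex.ofReal_re _

lemma spectrum_berezinToeplitz_subset_Icc (he : MemLp e 2 μ)
    (hres : berezinToeplitz μ e (fun _ => 1) = 1)
    (hb : AEStronglyMeasurable b μ) (hbI : ∀ᵐ x ∂μ, b x ∈ Icc η M) :
    spectrum ℝ (berezinToeplitz μ e b) ⊆ Icc η M := by
  have hB := isHermitian_berezinToeplitz μ e b
  rw [hB.spectrum_real_eq_range_eigenvalues, range_subset_iff]
  intro i
  have := isProbabilityMeasure_husimiMeasure he hres (hB.eigenvectorBasis.norm_eq_one i)
  have hac := husimiMeasure_absolutelyContinuous (μ := μ) (e := e) (hB.eigenvectorBasis i)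
  rw [eigenvalues_berezinToeplitz hB he hb
    (hbI.mono fun x hx => abs_le_max_abs_abs hx.1 hx.2)]
  exact (convex_Icc η M).integral_mem isClosed_Icc (hac.ae_le hbI)
    (.of_mem_Icc η M (hb.mono_ac hac).aemeasurable (hac.ae_le hbI))

lemma norm_trace_berezinToeplitz_mul_cfc_sub_le [IsFiniteMeasure μ] (he : MemLp e 2 μ)
    (hres : berezinToeplitz μ e (fun _ => 1) = 1) {c : ℝ≥0} (hc : ∀ x, ‖e x‖ ^ 2 = c)
    (ha : AEStronglyMeasurable a μ) (haA : ∀ᵐ x ∂μ, |a x| ≤ A)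
    (hb : AEStronglyMeasurable b μ) (hbI : ∀ᵐ x ∂μ, b x ∈ Icc η M)
    (hf : ContinuousOn f (Icc η M))
    (hfC : ∀ s ∈ Icc η M, ∀ t ∈ Icc η M, |f s - f t| ≤ ε + C * (s - t) ^ 2) :
    ‖(berezinToeplitz μ e a * cfc f (berezinToeplitz μ e b)).trace -
        ((c * ∫ x, a x * f (b x) ∂μ : ℝ) : ℂ)‖ ≤
      A * (ε * Fintype.card ι +
        C * (c * ∫ x, b x ^ 2 ∂μ - ∑ j, ∑ k, ‖berezinToeplitz μ e b j k‖ ^ 2)) := by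
  have hB := isHermitian_berezinToeplitz μ e b
  have heig := eigenvalues_berezinToeplitz hB he hb
    (hbI.mono fun x hx => abs_le_max_abs_abs hx.1 hx.2)
  have (i : ι) : IsProbabilityMeasure (husimiMeasure μ e (hB.eigenvectorBasis i)) :=
    isProbabilityMeasure_husimiMeasure he hres (hB.eigenvectorBasis.norm_eq_one i)
  rw [← sum_eigenvalues_sq hB, trace_mul_cfc hB]
  simp only [star_dotProduct_berezinToeplitz_mulVec he ha haA, heig, ← Complex.ofReal_mul,
    ← Complex.ofReal_sum, ← Complex.ofReal_sub, Complex.norm_real, Real.norm_eq_abs]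
  exact abs_sum_mul_integral_sub_mul_integral_le
    (sum_husimiMeasure he.1 hc hB.eigenvectorBasis) ha haA hb hbI hf hfC

end Eigenvalues

end BerezinToeplitz

section Lattice

open scoped Topology

lemma sum_sub_eq_tsum {G : Type*} [AddCommGroup G] [DecidableEq G] (B : Finset G) (c : G → ℝ)
    (j : G) : ∑ k ∈ B, c (j - k) = ∑' m, if j - m ∈ B then c m else 0 := by
  rw [← (Equiv.subLeft j).tsum_eq, tsum_eq_sum (s := B)]
  · exact Finset.sum_congr rfl fun k hk => by simp [hk]
  · intro k hk
    simp [hk]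

lemma tendsto_inv_card_mul_sum_sub_of_folner {G : Type*} [AddCommGroup G] [DecidableEq G]
    {B : ℕ → Finset G}
    (hB : ∀ m, Tendsto (fun n => ((B n).card : ℝ)⁻¹ * {j ∈ B n | j - m ∈ B n}.card) atTop (𝓝 1))
    {c : G → ℝ} (hc : Summable c) :
    Tendsto (fun n => ((B n).card : ℝ)⁻¹ * ∑ j ∈ B n, ∑ k ∈ B n, c (j - k)) atTop
      (𝓝 (∑' m, c m)) := by
  have hfubini (n : ℕ) : ((B n).card : ℝ)⁻¹ * ∑ j ∈ B n, ∑ k ∈ B n, c (j - k) =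
      ∑' m, ((B n).card : ℝ)⁻¹ * {j ∈ B n | j - m ∈ B n}.card * c m := by
    have hsummable (j : G) : Summable fun m => if j - m ∈ B n then c m else 0 :=
      (hc.indicator {m | j - m ∈ B n}).congr fun m => by
        simp only [indicator, mem_ofPred_eq]
        congr
    simp only [sum_sub_eq_tsum, ← Summable.tsum_finsetSum fun j _ => hsummable j, ← tsum_mul_left,
      Finset.sum_ite, Finset.sum_const, nsmul_eq_mul, mul_zero, add_zero, mul_assoc]
  simp only [hfubini]
  refine tendsto_tsum_of_dominated_convergence hc.abs (fun m => ?_) (.of_forall fun n m => ?_)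
  · simpa using (hB m).mul_const (c m)
  · rw [norm_mul, Real.norm_of_nonneg (by positivity)]
    refine mul_le_of_le_one_left (norm_nonneg _) (inv_mul_le_one_of_le₀ ?_ (by positivity))
    exact_mod_cast Finset.card_filter_le _ _

variable {d : Type*} [Fintype d] [DecidableEq d]

/-- The box `{0, …, n - 1}^d` in `ℤ^d`. -/
def latticeBox (d : Type*) [Fintype d] [DecidableEq d] (n : ℕ) : Finset (d → ℤ) :=
  Fintype.piFinset fun _ => Finset.Ico 0 (n : ℤ)

lemma card_latticeBox (n : ℕ) : (latticeBox d n).card = n ^ Fintype.card d := by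
  simp [latticeBox]

lemma sum_latticeBox {α : Type*} [AddCommMonoid α] (n : ℕ) (g : (d → ℤ) → α) :
    ∑ j ∈ latticeBox d n, g j = ∑ j : d → Fin n, g fun i => (j i : ℤ) := by
  symm
  refine Finset.sum_bij (fun j _ i => (j i : ℤ)) (fun j _ => ?_) (fun j _ k _ hjk => ?_)
    (fun j hj => ?_) (fun _ _ => rfl)
  · simp [latticeBox]
  · ext i
    exact_mod_cast congrFun hjk i
  · simp only [latticeBox, Fintype.mem_piFinset, Finset.mem_Ico] at hj
    refine ⟨fun i => ⟨(j i).toNat, by have := hj i; omega⟩, Finset.mem_univ _, ?_⟩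
    ext i
    exact Int.toNat_of_nonneg (hj i).1

lemma tendsto_latticeBox_overlap (m : d → ℤ) :
    Tendsto (fun n => ((latticeBox d n).card : ℝ)⁻¹ *
      {j ∈ latticeBox d n | j - m ∈ latticeBox d n}.card) atTop (𝓝 1) := by
  have hoverlap (n : ℕ) : {j ∈ latticeBox d n | j - m ∈ latticeBox d n} =
      Fintype.piFinset fun i => Finset.Ico (max 0 (m i)) (min (n : ℤ) (n + m i)) := by
    ext j
    simp only [latticeBox, Finset.mem_filter, Fintype.mem_piFinset, Finset.mem_Ico, Pi.sub_apply,
      ← forall_and]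
    exact forall_congr' fun i => by omega
  have hside (i : d) : Tendsto (fun n : ℕ => (n : ℝ)⁻¹ *
      (Finset.Ico (max 0 (m i)) (min (n : ℤ) (n + m i))).card) atTop (𝓝 1) := by
    have hlim : Tendsto (fun n : ℕ => 1 - |(m i : ℝ)| * (n : ℝ)⁻¹) atTop (𝓝 1) := by
      simpa using tendsto_const_nhds.sub
        ((tendsto_inv_atTop_nhds_zero_nat (𝕜 := ℝ)).const_mul |(m i : ℝ)|)
    refine hlim.congr' ?_
    filter_upwards [eventually_ge_atTop (|m i|.toNat + 1)] with n hn
    have hcard : ((Finset.Ico (max 0 (m i)) (min (n : ℤ) (n + m i))).card : ℤ) = n - |m i| := by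
      rw [Int.card_Ico]
      rcases abs_cases (m i) with h | h <;> omega
    have hcard' : ((Finset.Ico (max 0 (m i)) (min (n : ℤ) (n + m i))).card : ℝ) =
        n - |(m i : ℝ)| := by exact_mod_cast hcard
    have hn0 : (n : ℝ) ≠ 0 := by norm_cast; omega
    rw [hcard']
    field_simp
  have hprod := tendsto_finsetProd Finset.univ fun i _ => hside i
  simpa [hoverlap, card_latticeBox, Finset.prod_mul_distrib] using hprod

lemma tendsto_inv_pow_mul_sum_fin_sub {c : (d → ℤ) → ℝ} {S : ℝ} (hc : HasSum c S) :
    Tendsto (fun n : ℕ => ((n : ℝ) ^ Fintype.card d)⁻¹ *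
      ∑ j : d → Fin n, ∑ k : d → Fin n, c fun i => (j i : ℤ) - (k i : ℤ)) atTop (𝓝 S) := by
  have h := tendsto_inv_card_mul_sum_sub_of_folner tendsto_latticeBox_overlap hc.summable
  simpa [hc.tsum_eq, card_latticeBox, sum_latticeBox, Pi.sub_def] using h

end Lattice

section Fourier

open ProbabilityTheory Real

open scoped NNReal

variable {ν : ℕ}

/-- The uniform probability measure on `[0, 2π)^ν`. -/
def cubeMeasure (ν : ℕ) : Measure (Fin ν → ℝ) := volume[|cube ν]

lemma measurableSet_cube : MeasurableSet (cube ν) :=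
  MeasurableSet.univ_pi fun _ => measurableSet_Ico

lemma volume_cube : volume (cube ν) = ENNReal.ofReal ((2 * π) ^ ν) := by
  simp [cube, Real.volume_pi_Ico, ENNReal.ofReal_pow two_pi_pos.le]

instance : IsProbabilityMeasure (cubeMeasure ν) :=
  cond_isProbabilityMeasure_of_finite (by simp [volume_cube, pi_pos]) (by simp [volume_cube])

lemma integral_cubeMeasure {E : Type*} [NormedAddCommGroup E] [NormedSpace ℝ E]
    (g : (Fin ν → ℝ) → E) :
    ∫ x, g x ∂cubeMeasure ν = ((2 * π) ^ ν)⁻¹ • ∫ x in cube ν, g x := by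
  rw [cubeMeasure, ProbabilityTheory.cond, integral_smul_measure, volume_cube, ENNReal.toReal_inv,
    ENNReal.toReal_ofReal (by positivity)]

lemma cubeMeasure_absolutelyContinuous : cubeMeasure ν ≪ volume.restrict (cube ν) :=
  Measure.smul_absolutelyContinuous

lemma cubeMeasure_eq_pi : cubeMeasure ν = Measure.pi fun _ => volume[|Ico 0 (2 * π)] := by
  refine (Measure.pi_eq fun s _ => ?_).symm
  have hinter : cube ν ∩ univ.pi s = univ.pi fun i => Ico 0 (2 * π) ∩ s i := pi_inter_distrib.symm
  have hvol : (volume (cube ν))⁻¹ = ∏ _i : Fin ν, (volume (Ico 0 (2 * π)))⁻¹ := by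
    rw [volume_cube, ENNReal.ofReal_pow two_pi_pos.le, ENNReal.inv_pow]
    simp
  rw [cubeMeasure, cond_apply measurableSet_cube, hinter, hvol,
    volume_pi_pi, ← Finset.prod_mul_distrib]
  simp only [cond_apply measurableSet_Ico]

/-- The Fourier mode `x ↦ e^{-i j·x}`. -/
def fourierMode (j : Fin ν → ℤ) (x : Fin ν → ℝ) : ℂ :=
  Complex.exp (-Complex.I * ∑ m, (j m : ℂ) * (x m : ℂ))

lemma continuous_fourierMode (j : Fin ν → ℤ) : Continuous (fourierMode j) := by
  unfold fourierMode
  fun_prop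

lemma fourierMode_mul_star (j k : Fin ν → ℤ) (x : Fin ν → ℝ) :
    fourierMode j x * star (fourierMode k x) = fourierMode (j - k) x := by
  simp only [fourierMode, RCLike.star_def, ← Complex.exp_conj, ← Complex.exp_add, map_mul, map_neg,
    Complex.conj_I, map_sum, Complex.conj_ofReal, map_intCast, Pi.sub_apply, Int.cast_sub, sub_mul,
    Finset.sum_sub_distrib]
  ring_nf

lemma norm_fourierMode (j : Fin ν → ℤ) (x : Fin ν → ℝ) : ‖fourierMode j x‖ = 1 := by
  have hphase : -Complex.I * ∑ m, (j m : ℂ) * (x m : ℂ) =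
      ((-∑ m, j m * x m : ℝ) : ℂ) * Complex.I := by
    push_cast
    ring
  rw [fourierMode, hphase, Complex.norm_exp_ofReal_mul_I]

lemma fourierCoefficient_eq_integral (a : (Fin ν → ℝ) → ℂ) (j : Fin ν → ℤ) :
    fourierCoefficient a j = ∫ x, a x * fourierMode j x ∂cubeMeasure ν := by
  rw [integral_cubeMeasure, Complex.real_smul, Complex.ofReal_inv]
  rfl

lemma measurePreserving_two_pi_mul :
    MeasurePreserving (fun s : ℝ => 2 * π * s) (volume.restrict (Ioc 0 1))
      volume[|Ico 0 (2 * π)] := by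
  refine ⟨measurable_const_mul _, ?_⟩
  have hpre : (fun s : ℝ => 2 * π * s) ⁻¹' Ioc 0 (2 * π) = Ioc 0 1 := by
    rw [preimage_const_mul_Ioc₀ _ _ two_pi_pos, zero_div, div_self two_pi_pos.ne']
  rw [← hpre, ← Measure.restrict_map (measurable_const_mul _) measurableSet_Ioc,
    Real.map_volume_mul_left two_pi_pos.ne', ProbabilityTheory.cond,
    Measure.restrict_congr_set Ico_ae_eq_Ioc, Measure.restrict_smul, Real.volume_Ico, sub_zero,
    abs_of_pos (inv_pos.2 two_pi_pos), ENNReal.ofReal_inv_of_pos two_pi_pos]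

lemma measurePreserving_circleAngle :
    MeasurePreserving (fun t : UnitAddCircle => 2 * π * (AddCircle.equivIoc (1 : ℝ) 0 t : ℝ))
      AddCircle.haarAddCircle volume[|Ico 0 (2 * π)] := by
  have h : MeasurePreserving (fun t : UnitAddCircle => (AddCircle.equivIoc (1 : ℝ) 0 t : ℝ))
      volume (volume.restrict (Ioc 0 (0 + 1))) :=
    (measurePreserving_subtype_coe measurableSet_Ioc).comp
      (AddCircle.measurePreserving_equivIoc (T := 1))
  rw [AddCircle.volume_eq_smul_haarAddCircle, ENNReal.ofReal_one, one_smul] at h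
  exact measurePreserving_two_pi_mul.comp (by simpa only [zero_add] using h)

section Torus

-- Mathlib's Fourier theory on `UnitAddTorus` is normalised by these instances, local to its file.
local instance : MeasureSpace UnitAddCircle := ⟨AddCircle.haarAddCircle⟩

local instance : Measure.IsAddHaarMeasure (volume : Measure UnitAddCircle) :=
  inferInstanceAs (Measure.IsAddHaarMeasure AddCircle.haarAddCircle)

local instance : IsProbabilityMeasure (volume : Measure UnitAddCircle) :=
  inferInstanceAs (IsProbabilityMeasure AddCircle.haarAddCircle)

/-- The coordinates in `(0, 2π]` of a point of the torus. -/
def torusAngle (t : UnitAddTorus (Fin ν)) : Fin ν → ℝ :=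
  fun i => 2 * π * (AddCircle.equivIoc (1 : ℝ) 0 (t i) : ℝ)

lemma measurePreserving_torusAngle :
    MeasurePreserving (torusAngle (ν := ν)) volume (cubeMeasure ν) := by
  rw [cubeMeasure_eq_pi]
  exact measurePreserving_pi _ _ fun _ => measurePreserving_circleAngle

lemma mFourier_neg_eq_fourierMode (j : Fin ν → ℤ) (t : UnitAddTorus (Fin ν)) :
    UnitAddTorus.mFourier (-j) t = fourierMode j (torusAngle t) := by
  simp only [UnitAddTorus.mFourier, ContinuousMap.coe_mk, fourierMode, Finset.mul_sum,
    Complex.exp_sum]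
  refine Finset.prod_congr rfl fun i _ => ?_
  conv_lhs => rw [← AddCircle.coe_equivIoc (p := (1 : ℝ)) (a := 0) (y := t i), fourier_coe_apply]
  congr 1
  simp only [torusAngle, Pi.neg_apply]
  push_cast
  ring

lemma fourierCoefficient_eq_mFourierCoeff {a : (Fin ν → ℝ) → ℂ}
    (ha : AEStronglyMeasurable a (cubeMeasure ν)) (j : Fin ν → ℤ) :
    fourierCoefficient a j = UnitAddTorus.mFourierCoeff (fun t => a (torusAngle t)) j := by
  have hmode : AEStronglyMeasurable (fourierMode j) (cubeMeasure ν) :=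
    (continuous_fourierMode j).aestronglyMeasurable
  rw [fourierCoefficient_eq_integral, ← measurePreserving_torusAngle.map_eq,
    integral_map measurePreserving_torusAngle.aemeasurable
      (measurePreserving_torusAngle.map_eq ▸ ha.mul hmode)]
  simp only [UnitAddTorus.mFourierCoeff, mFourier_neg_eq_fourierMode, smul_eq_mul, mul_comm]

lemma fourierCoefficient_one (j : Fin ν → ℤ) :
    fourierCoefficient (fun _ => 1) j = if j = 0 then 1 else 0 := by
  have horth := orthonormal_iff_ite.mp (UnitAddTorus.orthonormal_mFourier (d := Fin ν)) j 0
  simp only [ContinuousMap.inner_toLp, ← UnitAddTorus.mFourier_neg, UnitAddTorus.mFourier_zero,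
    ContinuousMap.one_apply, one_mul] at horth
  rw [fourierCoefficient_eq_mFourierCoeff aestronglyMeasurable_const, ← horth]
  simp only [UnitAddTorus.mFourierCoeff, smul_eq_mul, mul_one]

lemma hasSum_norm_fourierCoefficient_sq {b : (Fin ν → ℝ) → ℂ} (hb : MemLp b 2 (cubeMeasure ν)) :
    HasSum (fun j => ‖fourierCoefficient b j‖ ^ 2) (∫ x, ‖b x‖ ^ 2 ∂cubeMeasure ν) := by
  have hmem := hb.comp_measurePreserving measurePreserving_torusAngle
  have hcoeff (j : Fin ν → ℤ) :
      UnitAddTorus.mFourierCoeff (hmem.toLp _) j = fourierCoefficient b j := by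
    rw [fourierCoefficient_eq_mFourierCoeff hb.1]
    refine integral_congr_ae ?_
    filter_upwards [hmem.coeFn_toLp] with t ht
    rw [ht, Function.comp_apply]
  have hnorm : ∫ t, ‖hmem.toLp _ t‖ ^ 2 = ∫ x, ‖b x‖ ^ 2 ∂cubeMeasure ν := by
    rw [← measurePreserving_torusAngle.map_eq,
      integral_map measurePreserving_torusAngle.aemeasurable
        (measurePreserving_torusAngle.map_eq ▸ hb.1.norm.pow 2)]
    refine integral_congr_ae ?_
    filter_upwards [hmem.coeFn_toLp] with t ht
    rw [ht, Function.comp_apply]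
  simpa only [hcoeff, hnorm] using UnitAddTorus.hasSum_sq_mFourierCoeff (hmem.toLp _)

end Torus

end Fourier

section Szego

open Real

open scoped Topology NNReal

variable {ν : ℕ}

/-- The coherent state `(e^{-i k·x})_k` of the box `{0, …, n - 1}^ν` at `x`. It is not normalised:
unimodular entries make Toeplitz matrices the Berezin–Toeplitz matrices of these states. -/
def boxState (n : ℕ) (x : Fin ν → ℝ) : EuclideanSpace ℂ (Fin ν → Fin n) :=
  WithLp.toLp 2 fun k => fourierMode (fun m => (k m : ℤ)) x

lemma norm_boxState_sq (n : ℕ) (x : Fin ν → ℝ) : ‖boxState n x‖ ^ 2 = ((n ^ ν : ℝ≥0) : ℝ) := by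
  simp [EuclideanSpace.norm_sq_eq, boxState, norm_fourierMode]

lemma memLp_boxState (n : ℕ) : MemLp (boxState (ν := ν) n) 2 (cubeMeasure ν) := by
  have hcont : Continuous (boxState (ν := ν) n) :=
    (PiLp.continuous_toLp 2 _).comp (continuous_pi fun _ => continuous_fourierMode _)
  refine .of_bound hcont.aestronglyMeasurable √(n ^ ν) (.of_forall fun x => ?_)
  exact Real.le_sqrt_of_sq_le (by simp [norm_boxState_sq])

lemma toeplitz_eq_berezinToeplitz (n : ℕ) (a : (Fin ν → ℝ) → ℝ) :
    toeplitz n (fun x => (a x : ℂ)) = berezinToeplitz (cubeMeasure ν) (boxState n) a := by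
  ext j k
  simp only [toeplitz, berezinToeplitz, of_apply, fourierCoefficient_eq_integral, boxState,
    fourierMode_mul_star, Pi.sub_def]

lemma toeplitz_one (n : ℕ) : toeplitz (ν := ν) n (fun _ => 1) = 1 := by
  ext j k
  have hjk : (fun m => (j m : ℤ) - (k m : ℤ)) = 0 ↔ j = k := by
    simp [funext_iff, sub_eq_zero, Fin.ext_iff]
  simp only [toeplitz, of_apply, fourierCoefficient_one, hjk, one_apply]

lemma berezinToeplitz_boxState_one (n : ℕ) :
    berezinToeplitz (cubeMeasure ν) (boxState n) (fun _ => 1) = 1 := by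
  rw [← toeplitz_eq_berezinToeplitz, ← toeplitz_one]
  simp

lemma isSelfAdjoint_toeplitz (n : ℕ) (a : (Fin ν → ℝ) → ℝ) :
    IsSelfAdjoint (toeplitz n fun x => (a x : ℂ)) :=
  toeplitz_eq_berezinToeplitz n a ▸ (isHermitian_berezinToeplitz _ _ a).isSelfAdjoint

variable {a b b₁ b₂ : (Fin ν → ℝ) → ℝ} {A η M : ℝ} {f : ℝ → ℝ}

lemma spectrum_toeplitz_subset_Icc (hb : AEStronglyMeasurable b (cubeMeasure ν))
    (hbI : ∀ᵐ x ∂cubeMeasure ν, b x ∈ Icc η M) (n : ℕ) :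
    spectrum ℝ (toeplitz n fun x => (b x : ℂ)) ⊆ Icc η M :=
  toeplitz_eq_berezinToeplitz n b ▸ spectrum_berezinToeplitz_subset_Icc (memLp_boxState n)
    (berezinToeplitz_boxState_one n) hb hbI

lemma tendsto_inv_pow_mul_sum_norm_toeplitz_sq {b : (Fin ν → ℝ) → ℂ}
    (hb : MemLp b 2 (cubeMeasure ν)) :
    Tendsto (fun n : ℕ => ((n : ℝ) ^ ν)⁻¹ * ∑ j, ∑ k, ‖toeplitz n b j k‖ ^ 2) atTop
      (𝓝 (∫ x, ‖b x‖ ^ 2 ∂cubeMeasure ν)) := by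
  simpa [toeplitz] using
    tendsto_inv_pow_mul_sum_fin_sub (hasSum_norm_fourierCoefficient_sq hb)

lemma norm_inv_pow_mul_trace_toeplitz_mul_cfc_sub_le {ε C : ℝ} {n : ℕ} (hn : n ≠ 0)
    (ha : AEStronglyMeasurable a (cubeMeasure ν)) (haA : ∀ᵐ x ∂cubeMeasure ν, |a x| ≤ A)
    (hb : AEStronglyMeasurable b (cubeMeasure ν)) (hbI : ∀ᵐ x ∂cubeMeasure ν, b x ∈ Icc η M)
    (hf : ContinuousOn f (Icc η M))
    (hfC : ∀ s ∈ Icc η M, ∀ t ∈ Icc η M, |f s - f t| ≤ ε + C * (s - t) ^ 2) :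
    ‖((n : ℂ) ^ ν)⁻¹ *
          (toeplitz n (fun x => (a x : ℂ)) * cfc f (toeplitz n fun x => (b x : ℂ))).trace -
        ((∫ x, a x * f (b x) ∂cubeMeasure ν : ℝ) : ℂ)‖ ≤
      A * (ε + C * (∫ x, b x ^ 2 ∂cubeMeasure ν -
        ((n : ℝ) ^ ν)⁻¹ * ∑ j, ∑ k, ‖toeplitz n (fun x => (b x : ℂ)) j k‖ ^ 2)) := by
  have hnν : (n : ℝ) ^ ν ≠ 0 := by positivity
  have hnνℂ : (n : ℂ) ^ ν ≠ 0 := by exact_mod_cast hnν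
  have hle := norm_trace_berezinToeplitz_mul_cfc_sub_le (memLp_boxState n)
    (berezinToeplitz_boxState_one n) (norm_boxState_sq n) ha haA hb hbI hf hfC
  simp only [← toeplitz_eq_berezinToeplitz, Fintype.card_pi_const, Fintype.card_fin] at hle
  push_cast at hle
  set S := ∑ j, ∑ k, ‖toeplitz n (fun x => (b x : ℂ)) j k‖ ^ 2
  set τ := (toeplitz n (fun x => (a x : ℂ)) * cfc f (toeplitz n fun x => (b x : ℂ))).trace
  calc ‖((n : ℂ) ^ ν)⁻¹ * τ - ((∫ x, a x * f (b x) ∂cubeMeasure ν : ℝ) : ℂ)‖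
      = ((n : ℝ) ^ ν)⁻¹ * ‖τ - (n : ℂ) ^ ν * ((∫ x, a x * f (b x) ∂cubeMeasure ν : ℝ) : ℂ)‖ := by
        rw [← Complex.norm_natCast, ← norm_pow, ← norm_inv, ← norm_mul, mul_sub,
          inv_mul_cancel_left₀ hnνℂ]
    _ ≤ ((n : ℝ) ^ ν)⁻¹ * (A * (ε * n ^ ν + C * (n ^ ν * ∫ x, b x ^ 2 ∂cubeMeasure ν - S))) := by
        gcongr
    _ = _ := by field_simp

lemma tendsto_inv_pow_mul_trace_toeplitz_mul_cfc
    (ha : AEStronglyMeasurable a (cubeMeasure ν)) (haA : ∀ᵐ x ∂cubeMeasure ν, |a x| ≤ A)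
    (hb : AEStronglyMeasurable b (cubeMeasure ν)) (hbI : ∀ᵐ x ∂cubeMeasure ν, b x ∈ Icc η M)
    (hf : ContinuousOn f (Icc η M)) :
    Tendsto (fun n : ℕ => ((n : ℂ) ^ ν)⁻¹ *
        (toeplitz n (fun x => (a x : ℂ)) * cfc f (toeplitz n fun x => (b x : ℂ))).trace) atTop
      (𝓝 ((∫ x, a x * f (b x) ∂cubeMeasure ν : ℝ) : ℂ)) := by
  have hvar := (tendsto_inv_pow_mul_sum_norm_toeplitz_sq
    (memLp_of_bounded hbI hb 2).ofReal).const_sub (∫ x, b x ^ 2 ∂cubeMeasure ν)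
  simp only [Complex.coe_algebraMap, Complex.norm_real, norm_eq_abs, sq_abs, sub_self] at hvar
  have hA : 0 ≤ A := by
    obtain ⟨x, hx⟩ := haA.exists
    exact (abs_nonneg _).trans hx
  refine Metric.tendsto_nhds.2 fun δ hδ => ?_
  obtain ⟨C, hC⟩ := exists_dist_le_add_mul_dist_sq isCompact_Icc hf
    (ε := δ / (A + 1)) (by positivity)
  simp only [Real.dist_eq, sq_abs] at hC
  have hlim := ((hvar.const_mul C).const_add (δ / (A + 1))).const_mul A
  have hlt : A * (δ / (A + 1) + C * 0) < δ := by
    rw [mul_zero, add_zero, mul_div_left_comm]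
    exact mul_lt_of_lt_one_right hδ ((div_lt_one (by positivity)).2 (lt_add_one A))
  filter_upwards [hlim.eventually_lt_const hlt, eventually_ne_atTop 0] with n hn hn0
  rw [dist_eq_norm]
  exact (norm_inv_pow_mul_trace_toeplitz_mul_cfc_sub_le hn0 ha haA hb hbI hf hC).trans_lt hn

lemma tendsto_inv_pow_mul_trace_toeplitz_mul_cfc_sub_cfc
    (ha : AEStronglyMeasurable a (cubeMeasure ν)) (haA : ∀ᵐ x ∂cubeMeasure ν, |a x| ≤ A)
    (hb₁ : AEStronglyMeasurable b₁ (cubeMeasure ν)) (hb₁I : ∀ᵐ x ∂cubeMeasure ν, b₁ x ∈ Icc η M)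
    (hb₂ : AEStronglyMeasurable b₂ (cubeMeasure ν)) (hb₂I : ∀ᵐ x ∂cubeMeasure ν, b₂ x ∈ Icc η M)
    (hf : ContinuousOn f (Icc η M)) :
    Tendsto (fun n : ℕ => ((n : ℂ) ^ ν)⁻¹ * (toeplitz n (fun x => (a x : ℂ)) *
        (cfc f (toeplitz n fun x => (b₁ x : ℂ)) - cfc f (toeplitz n fun x => (b₂ x : ℂ)))).trace)
      atTop (𝓝 ((∫ x, a x * (f (b₁ x) - f (b₂ x)) ∂cubeMeasure ν : ℝ) : ℂ)) := by
  have hint {b : (Fin ν → ℝ) → ℝ} (hb : AEStronglyMeasurable b (cubeMeasure ν))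
      (hbI : ∀ᵐ x ∂cubeMeasure ν, b x ∈ Icc η M) :
      Integrable (fun x => a x * f (b x)) (cubeMeasure ν) :=
    integrable_mul_comp_of_continuousOn_Icc (.of_bound ha A haA) hf hb hbI
  simp only [mul_sub, trace_sub]
  rw [integral_sub (hint hb₁ hb₁I) (hint hb₂ hb₂I), Complex.ofReal_sub]
  exact (tendsto_inv_pow_mul_trace_toeplitz_mul_cfc ha haA hb₁ hb₁I hf).sub
    (tendsto_inv_pow_mul_trace_toeplitz_mul_cfc ha haA hb₂ hb₂I hf)

end Szego

section RelativeEntropy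

open Real

variable {m : Type*} [Fintype m] [DecidableEq m] {Q P : Matrix m m ℂ}

lemma add_one_mul_inv_add_one (hQ : spectrum ℝ Q ⊆ Ioi 0) : (Q + 1) * (Q + 1)⁻¹ = 1 := by
  have hunit : IsUnit (algebraMap ℝ (Matrix m m ℂ) (-1) - Q) :=
    spectrum.notMem_iff.1 fun h => by linarith [mem_Ioi.1 (hQ h)]
  have hneg : algebraMap ℝ (Matrix m m ℂ) (-1) - Q = -(Q + 1) := by
    rw [map_neg, map_one, neg_add_rev, sub_eq_add_neg]
  exact mul_nonsing_inv _ ((isUnit_iff_isUnit_det _).1 (IsUnit.neg_iff _ |>.1 (hneg ▸ hunit)))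

lemma one_sub_mul_inv_add_one (hQ : spectrum ℝ Q ⊆ Ioi 0) :
    1 - Q * (Q + 1)⁻¹ = (Q + 1)⁻¹ := by
  rw [sub_eq_iff_eq_add', ← add_one_mul, add_one_mul_inv_add_one hQ]

lemma inv_add_one_eq_cfc (hQsa : IsSelfAdjoint Q) (hQ : spectrum ℝ Q ⊆ Ioi 0) :
    (Q + 1)⁻¹ = cfc (fun x : ℝ => (1 + x)⁻¹) Q := by
  rw [cfc_inv (fun x : ℝ => 1 + x) Q (fun x hx => by have := mem_Ioi.1 (hQ hx); positivity),
    cfc_const_add 1 (fun x => x) Q, cfc_id' ℝ Q, map_one, nonsing_inv_eq_ringInverse, add_comm]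

lemma mlog_mul_inv_add_one (hQsa : IsSelfAdjoint Q) (hQ : spectrum ℝ Q ⊆ Ioi 0) :
    mlog (Q * (Q + 1)⁻¹) = cfc (fun x => log (x / (1 + x))) Q := by
  have hR : Q * (Q + 1)⁻¹ = cfc (fun x : ℝ => x / (1 + x)) Q := by
    simp only [div_eq_mul_inv]
    rw [cfc_mul (fun x => x) _ Q (Q.finite_real_spectrum.continuousOn _)
      (Q.finite_real_spectrum.continuousOn _), cfc_id' ℝ Q, inv_add_one_eq_cfc hQsa hQ]
  rw [hR, mlog, ← cfc_comp' log _ Q ((Q.finite_real_spectrum.image _).continuousOn _)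
    (Q.finite_real_spectrum.continuousOn _)]

lemma mlog_inv_add_one (hQsa : IsSelfAdjoint Q) (hQ : spectrum ℝ Q ⊆ Ioi 0) :
    mlog (Q + 1)⁻¹ = cfc (fun x => log (1 + x)⁻¹) Q := by
  rw [inv_add_one_eq_cfc hQsa hQ, mlog, ← cfc_comp' log _ Q
    ((Q.finite_real_spectrum.image _).continuousOn _) (Q.finite_real_spectrum.continuousOn _)]

lemma one_add_mul_S2mat (hQsa : IsSelfAdjoint Q) (hQ : spectrum ℝ Q ⊆ Ioi 0)
    (hPsa : IsSelfAdjoint P) (hP : spectrum ℝ P ⊆ Ioi 0) :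
    (1 + Q) * S2mat (Q * (Q + 1)⁻¹) (P * (P + 1)⁻¹) =
      Q * (cfc (fun x => log (x / (1 + x))) Q - cfc (fun x => log (x / (1 + x))) P) +
        (cfc (fun x => log (1 + x)⁻¹) Q - cfc (fun x => log (1 + x)⁻¹) P) := by
  have hmul : (1 + Q) * (Q * (Q + 1)⁻¹) = Q := by
    rw [← mul_assoc, one_add_mul, ← mul_one_add, mul_assoc, add_comm 1 Q,
      add_one_mul_inv_add_one hQ, mul_one]
  rw [S2mat, one_sub_mul_inv_add_one hQ, one_sub_mul_inv_add_one hP,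
    mlog_mul_inv_add_one hQsa hQ, mlog_mul_inv_add_one hPsa hP, mlog_inv_add_one hQsa hQ,
    mlog_inv_add_one hPsa hP, mul_add, ← mul_assoc (1 + Q), hmul, ← mul_assoc (1 + Q),
    add_comm 1 Q, add_one_mul_inv_add_one hQ, one_mul]

lemma one_add_mul_S2s {q p : ℝ} (hq : 1 + q ≠ 0) (hp : 1 + p ≠ 0) :
    (1 + q) * S2s (q / (1 + q)) (p / (1 + p)) =
      q * (log (q / (1 + q)) - log (p / (1 + p))) + (log (1 + q)⁻¹ - log (1 + p)⁻¹) := by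
  have hsub {x : ℝ} (hx : 1 + x ≠ 0) : 1 - x / (1 + x) = (1 + x)⁻¹ := by field_simp; ring
  rw [S2s, hsub hq, hsub hp, mul_add, ← mul_assoc, ← mul_assoc, mul_div_cancel₀ _ hq,
    mul_inv_cancel₀ hq, one_mul]

lemma continuousOn_log_div_one_add : ContinuousOn (fun x => log (x / (1 + x))) (Ioi 0) :=
  have hne (x : ℝ) (hx : x ∈ Ioi 0) : 1 + x ≠ 0 := by have := mem_Ioi.1 hx; positivity
  (continuousOn_id.div (by fun_prop) hne).log fun x hx => div_ne_zero hx.ne' (hne x hx)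

lemma continuousOn_log_inv_one_add : ContinuousOn (fun x : ℝ => log (1 + x)⁻¹) (Ioi 0) :=
  have hne (x : ℝ) (hx : x ∈ Ioi 0) : 1 + x ≠ 0 := by have := mem_Ioi.1 hx; positivity
  (ContinuousOn.inv₀ (by fun_prop) hne).log fun x hx => inv_ne_zero (hne x hx)

lemma integral_one_add_mul_S2s {X : Type*} {mX : MeasurableSpace X} {μ : Measure X}
    [IsFiniteMeasure μ] {q₁ q₂ : X → ℝ} {η M : ℝ} (hη : 0 < η)
    (hm₁ : AEStronglyMeasurable q₁ μ) (hq₁ : ∀ᵐ x ∂μ, q₁ x ∈ Icc η M)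
    (hm₂ : AEStronglyMeasurable q₂ μ) (hq₂ : ∀ᵐ x ∂μ, q₂ x ∈ Icc η M) :
    ∫ x, (1 + q₁ x) * S2s (q₁ x / (1 + q₁ x)) (q₂ x / (1 + q₂ x)) ∂μ =
      ∫ x, q₁ x * (log (q₁ x / (1 + q₁ x)) - log (q₂ x / (1 + q₂ x))) ∂μ +
        ∫ x, (log (1 + q₁ x)⁻¹ - log (1 + q₂ x)⁻¹) ∂μ := by
  have hpos : Icc η M ⊆ Ioi 0 := fun x hx => hη.trans_le hx.1
  have hφ := integrable_mul_comp_sub_comp_of_continuousOn_Icc (.of_mem_Icc η M hm₁.aemeasurable hq₁)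
    (continuousOn_log_div_one_add.mono hpos) hm₁ hq₁ hm₂ hq₂
  have hψ := integrable_mul_comp_sub_comp_of_continuousOn_Icc (integrable_const 1)
    (continuousOn_log_inv_one_add.mono hpos) hm₁ hq₁ hm₂ hq₂
  simp only [one_mul] at hψ
  rw [← integral_add hφ hψ]
  refine integral_congr_ae ?_
  filter_upwards [hq₁, hq₂] with x hx₁ hx₂
  have := hη.trans_le hx₁.1
  have := hη.trans_le hx₂.1
  exact one_add_mul_S2s (by positivity) (by positivity)

end RelativeEntropy

/-- **Szegő-type limit for the relative entropy density.**  With `Q_k⁽ⁿ⁾ = T_n(q_k)`,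
`R_{k,n} = Q_k⁽ⁿ⁾(Q_k⁽ⁿ⁾+I)⁻¹` and `r_k = q_k/(1+q_k)`:
`lim_n (1/n^ν) Tr[(I + Q₁⁽ⁿ⁾) S₂(R_{1,n}‖R_{2,n})]
  = (2π)^{−ν} ∫ (1+q₁(x)) S₂(r₁(x)‖r₂(x)) dx`. -/
theorem trace_S2_limit {ν : ℕ} (hν : 1 ≤ ν)
    (q₁ q₂ : (Fin ν → ℝ) → ℝ) (η M : ℝ) (hη : 0 < η) (hηM : η ≤ M)
    (hmeas₁ : Measurable q₁) (hmeas₂ : Measurable q₂)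
    (hq₁ : ∀ᵐ x ∂(volume.restrict (cube ν)), q₁ x ∈ Set.Icc η M)
    (hq₂ : ∀ᵐ x ∂(volume.restrict (cube ν)), q₂ x ∈ Set.Icc η M) :
    Tendsto
      (fun n : ℕ => ((n : ℂ) ^ ν)⁻¹ *
        ((1 + toeplitz n (fun x => (q₁ x : ℂ))) *
          S2mat
            (toeplitz n (fun x => (q₁ x : ℂ)) *
              (toeplitz n (fun x => (q₁ x : ℂ)) + 1)⁻¹)
            (toeplitz n (fun x => (q₂ x : ℂ)) *
              (toeplitz n (fun x => (q₂ x : ℂ)) + 1)⁻¹)).trace)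
      atTop
      (nhds ((((2 * Real.pi) ^ ν : ℝ)⁻¹ *
        ∫ x in cube ν,
          (1 + q₁ x) * S2s (q₁ x / (1 + q₁ x)) (q₂ x / (1 + q₂ x)) : ℝ) : ℂ)) := by
  have hpos : Icc η M ⊆ Ioi 0 := fun x hx => hη.trans_le hx.1
  have hm₁ := hmeas₁.aestronglyMeasurable (μ := cubeMeasure ν)
  have hm₂ := hmeas₂.aestronglyMeasurable (μ := cubeMeasure ν)
  replace hq₁ : ∀ᵐ x ∂cubeMeasure ν, q₁ x ∈ Icc η M := cubeMeasure_absolutelyContinuous.ae_le hq₁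
  replace hq₂ : ∀ᵐ x ∂cubeMeasure ν, q₂ x ∈ Icc η M := cubeMeasure_absolutelyContinuous.ae_le hq₂
  have hφ := tendsto_inv_pow_mul_trace_toeplitz_mul_cfc_sub_cfc hm₁
    (hq₁.mono fun x hx => abs_le_max_abs_abs hx.1 hx.2) hm₁ hq₁ hm₂ hq₂
    (continuousOn_log_div_one_add.mono hpos)
  have hψ := tendsto_inv_pow_mul_trace_toeplitz_mul_cfc_sub_cfc (a := fun _ => 1) (A := 1)
    aestronglyMeasurable_const (by simp) hm₁ hq₁ hm₂ hq₂ (continuousOn_log_inv_one_add.mono hpos)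
  simp only [Complex.ofReal_one, toeplitz_one, one_mul] at hψ
  rw [← smul_eq_mul (a := ((2 * Real.pi) ^ ν : ℝ)⁻¹), ← integral_cubeMeasure,
    integral_one_add_mul_S2s hη hm₁ hq₁ hm₂ hq₂, Complex.ofReal_add]
  refine (hφ.add hψ).congr fun n => ?_
  rw [one_add_mul_S2mat (isSelfAdjoint_toeplitz n q₁)
    ((spectrum_toeplitz_subset_Icc hm₁ hq₁ n).trans hpos) (isSelfAdjoint_toeplitz n q₂)
    ((spectrum_toeplitz_subset_Icc hm₂ hq₂ n).trans hpos), trace_add, mul_add]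

end
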